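/- Let v_0, …, v_d be affinely independent points in ℝ^d, let S be their convex hull, and let δ = max_{i, j} ‖v_i − v_j‖. Let f : ℝ^d → ℝ be continuously differentiable on an open set containing S, with ‖f′(s)‖ ≤ G for all s ∈ S, where f′(s) denotes the derivative (gradient) of f at s and ‖·‖ its Euclidean (operator) norm. Let f_l : ℝ^d → ℝ be the unique affine map with f_l(v_i) = f(v_i) for all i ∈ {0, …, d}. Then for every s ∈ S, |f(s) − f_l(s)| ≤ √(d / (2(d + 1))) · δ · G. -/

import Mathlib

open Finset in
/-- The weighted variance of points equals half the weighted sum of squared mutual distances. -/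
theorem sum_sum_mul_norm_sub_sq {ι E : Type*} [Fintype ι] [NormedAddCommGroup E]
    [InnerProductSpace ℝ E] (w : ι → ℝ) (v : ι → E) (hw : ∑ i, w i = 1) :
    ∑ i, ∑ j, w i * w j * ‖v i - v j‖ ^ 2 = 2 * ∑ i, w i * ‖v i - ∑ j, w j • v j‖ ^ 2 := by
  set s := ∑ j, w j • v j with hs
  have centered : ∑ i, w i • (v i - s) = 0 := by
    simp [smul_sub, sum_sub_distrib, ← sum_smul, hw, hs]
  have cross (i : ι) : ∑ j, w j * inner ℝ (v i - s) (v j - s) = 0 := by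
    simp_rw [← real_inner_smul_right]
    rw [← inner_sum, centered, inner_zero_right]
  have inner_sum_eq (i : ι) : ∑ j, w i * w j * ‖v i - v j‖ ^ 2
      = w i * ‖v i - s‖ ^ 2 + w i * ∑ j, w j * ‖v j - s‖ ^ 2 := by
    calc ∑ j, w i * w j * ‖v i - v j‖ ^ 2
        = ∑ j, (w j * (w i * ‖v i - s‖ ^ 2)
            - 2 * w i * (w j * inner ℝ (v i - s) (v j - s))
            + w i * (w j * ‖v j - s‖ ^ 2)) := by
          refine sum_congr rfl fun j _ => ?_
          rw [← sub_sub_sub_cancel_right (v i) (v j) s, norm_sub_sq_real]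
          ring
      _ = _ := by
          rw [sum_add_distrib, sum_sub_distrib, ← sum_mul, ← mul_sum, ← mul_sum, cross, hw]
          ring
  simp_rw [inner_sum_eq]
  rw [sum_add_distrib, ← sum_mul, hw]
  ring

open Finset in
/-- A sharp bound on the weighted mean distance of `d + 1` points with mutual distances at most
`δ` to their weighted centre. -/
theorem sum_mul_norm_sub_le {d : ℕ} {E : Type*} [NormedAddCommGroup E] [InnerProductSpace ℝ E]
    (w : Fin (d + 1) → ℝ) (v : Fin (d + 1) → E) (hw0 : ∀ i, 0 ≤ w i) (hw : ∑ i, w i = 1)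
    {δ : ℝ} (hδ : ∀ i j, ‖v i - v j‖ ≤ δ) :
    ∑ i, w i * ‖v i - ∑ j, w j • v j‖ ≤ Real.sqrt (d / (2 * (d + 1))) * δ := by
  have hδ0 : 0 ≤ δ := (norm_nonneg _).trans (hδ 0 0)
  set s := ∑ j, w j • v j
  have jensen : (∑ i, w i * ‖v i - s‖) ^ 2 ≤ ∑ i, w i * ‖v i - s‖ ^ 2 :=
    Real.pow_arith_mean_le_arith_mean_pow univ w _ (fun i _ => hw0 i) hw
      (fun i _ => norm_nonneg _) 2
  have pairs : ∑ i, ∑ j, w i * w j * ‖v i - v j‖ ^ 2 ≤ (1 - ∑ i, w i ^ 2) * δ ^ 2 := by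
    calc ∑ i, ∑ j, w i * w j * ‖v i - v j‖ ^ 2
        ≤ ∑ i, ∑ j, (w i * w j * δ ^ 2 - if i = j then w i ^ 2 * δ ^ 2 else 0) := by
          refine sum_le_sum fun i _ => sum_le_sum fun j _ => ?_
          split_ifs with h
          · subst h
            simp [pow_two]
          · rw [sub_zero]
            have := hδ i j
            have := mul_nonneg (hw0 i) (hw0 j)
            gcongr
      _ = _ := by
          simp only [sum_sub_distrib, sum_ite_eq, mem_univ, if_true, ← sum_mul, ← mul_sum, hw]
          ring
  have squares : 1 / ((d : ℝ) + 1) ≤ ∑ i, w i ^ 2 := by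
    have := sq_sum_le_card_mul_sum_sq (s := univ) (f := w)
    rw [hw, card_univ, Fintype.card_fin] at this
    rw [div_le_iff₀ (by positivity)]
    push_cast at this
    linarith
  have variance : ∑ i, w i * ‖v i - s‖ ^ 2 ≤ d / (2 * (d + 1)) * δ ^ 2 := by
    have ident := sum_sum_mul_norm_sub_sq w v hw
    have coeff : (1 - 1 / ((d : ℝ) + 1)) = 2 * (d / (2 * (d + 1))) := by
      field_simp
      ring
    have := mul_le_mul_of_nonneg_right (sub_le_sub_left squares 1) (sq_nonneg δ)
    rw [coeff] at this
    linarith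
  refine le_of_sq_le_sq ?_ (by positivity)
  rw [mul_pow, Real.sq_sqrt (by positivity)]
  exact jensen.trans variance

/-- Case (iii) of the paper's Lemma 1 (Stämpfle 2000): the linear interpolation
error of a `C¹` function on a `d`-simplex of diameter `δ` is bounded by
`√(d / (2(d + 1))) · δ · G`, where `G` bounds the norm of the derivative on
the simplex. -/
theorem interpolation_error_C1 (d : ℕ)
    (v : Fin (d + 1) → EuclideanSpace ℝ (Fin d))
    (hv : AffineIndependent ℝ v)
    (S : Set (EuclideanSpace ℝ (Fin d)))
    (hS : S = convexHull ℝ (Set.range v))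
    (δ : ℝ)
    (hδ : IsGreatest {r : ℝ | ∃ i j, r = ‖v i - v j‖} δ)
    (f : EuclideanSpace ℝ (Fin d) → ℝ)
    (U : Set (EuclideanSpace ℝ (Fin d))) (hU : IsOpen U) (hSU : S ⊆ U)
    (hf : ContDiffOn ℝ 1 f U)
    (G : ℝ)
    (hG : ∀ s ∈ S, ‖fderiv ℝ f s‖ ≤ G)
    (fl : EuclideanSpace ℝ (Fin d) →ᵃ[ℝ] ℝ)
    (hfl : ∀ i, fl (v i) = f (v i)) :
    ∀ s ∈ S, |f s - fl s| ≤ Real.sqrt (d / (2 * (d + 1))) * δ * G := by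
  intro s hs
  have hconv : Convex ℝ S := hS ▸ convex_convexHull ℝ _
  have hvS (i) : v i ∈ S := hS ▸ subset_convexHull ℝ _ ⟨i, rfl⟩
  have hG0 : 0 ≤ G := (norm_nonneg _).trans (hG s hs)
  have hdiff (x) (hx : x ∈ S) : DifferentiableAt ℝ f x :=
    (hf.contDiffAt (hU.mem_nhds (hSU hx))).differentiableAt one_ne_zero
  obtain ⟨w, hw0, hw, hws⟩ : ∃ w : Fin (d + 1) → ℝ, (∀ i, 0 ≤ w i) ∧ ∑ i, w i = 1 ∧
      ∑ i, w i • v i = s := by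
    rw [hS, convexHull_range_eq_exists_affineCombination] at hs
    obtain ⟨t, w, hw0, hw, rfl⟩ := hs
    rw [t.affineCombination_eq_linear_combination v w hw]
    refine ⟨fun i => if i ∈ t then w i else 0, fun i => ?_, by simpa using hw, by simp [ite_smul]⟩
    dsimp only
    split_ifs with h
    exacts [hw0 i h, le_rfl]
  have hfls : fl s = ∑ i, w i * f (v i) := by
    rw [← hws, ← Finset.univ.affineCombination_eq_linear_combination v w hw,
      Finset.map_affineCombination _ _ _ hw,
      Finset.affineCombination_eq_linear_combination _ _ _ hw]
    simp [hfl]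
  have herr : f s - fl s = ∑ i, w i * (f s - f (v i)) := by
    simp [hfls, mul_sub, Finset.sum_sub_distrib, ← Finset.sum_mul, hw]
  calc |f s - fl s| ≤ ∑ i, |w i * (f s - f (v i))| := herr ▸ Finset.abs_sum_le_sum_abs _ _
    _ ≤ ∑ i, w i * ‖v i - s‖ * G := by
      refine Finset.sum_le_sum fun i _ => ?_
      rw [abs_mul, abs_of_nonneg (hw0 i), mul_assoc]
      refine mul_le_mul_of_nonneg_left ?_ (hw0 i)
      rw [norm_sub_rev, mul_comm]
      exact hconv.norm_image_sub_le_of_norm_fderiv_le hdiff hG (hvS i) hs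
    _ = (∑ i, w i * ‖v i - ∑ j, w j • v j‖) * G := by rw [hws, Finset.sum_mul]
    _ ≤ _ := mul_le_mul_of_nonneg_right
      (sum_mul_norm_sub_le w v hw0 hw fun i j => hδ.2 ⟨i, j, rfl⟩) hG0
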